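/- arXiv:1310.4284 — 2 statements merged into one kernel-verified Lean document; each statement's English description precedes it below -/
import Mathlib

section
/- Let (Ω, P) be a probability space, N a positive integer, and g : Fin N → ℝ with 0 < g_j ≤ 1 for all j. Let (Φ_j)_{j=1}^{N} be mutually independent real random variables on Ω with E[Φ_j] = 0, E[Φ_j²] = 1, and E[Φ_j⁴] = 1/g_j for every j (each Φ_j lying in L⁴). For u, v ∈ ℝ^N define w = (Σ_{j=1}^{N} u_j Φ_j) · (Σ_{j=1}^{N} v_j Φ_j). Then E[w²] = 2⟨u, v⟩² + ‖u‖₂²·‖v‖₂² + Σ_{j=1}^{N} (1/g_j)·u_j²·v_j² − 3·Σ_{j=1}^{N} u_j²·v_j². -/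
open MeasureTheory ProbabilityTheory Finset

/-!
For independent centered pairs the second-order moments `E[Z₁²]`, `E[Z₁Z₂]`, `E[Z₂²]` are additive,
and so is the fourth joint cumulant `κ(Z₁, Z₁, Z₂, Z₂) = E[Z₁²Z₂²] - 2 E[Z₁Z₂]² - E[Z₁²] E[Z₂²]`.
For `Z = ∑ j, Φ j • (u j, v j)` additivity evaluates `κ` and the three second-order moments, and the
last identity can then be solved for `E[Z₁²Z₂²]`, which is the moment in question.
-/

section IndependentPlaneVectors

variable {Ω : Type*} [MeasurableSpace Ω]

/-- The mixed moment `E[Z₁ᵐ Z₂ⁿ]` of a random vector `Z = (Z₁, Z₂)` in the plane. -/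
noncomputable def mixedMoment (Z : Ω → ℝ × ℝ) (m n : ℕ) (P : Measure Ω) : ℝ :=
  ∫ ω, (Z ω).1 ^ m * (Z ω).2 ^ n ∂P

/-- The fourth joint cumulant `κ(Z₁, Z₁, Z₂, Z₂)` of a centered random vector `Z = (Z₁, Z₂)`; the
terms of the general formula that involve first moments are left out. -/
noncomputable def fourthJointCumulant (Z : Ω → ℝ × ℝ) (P : Measure Ω) : ℝ :=
  mixedMoment Z 2 2 P - 2 * mixedMoment Z 1 1 P ^ 2 - mixedMoment Z 2 0 P * mixedMoment Z 0 2 P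

variable {P : Measure Ω}

theorem mixedMoment_zero_zero [IsProbabilityMeasure P] (Z : Ω → ℝ × ℝ) :
    mixedMoment Z 0 0 P = 1 := by
  simp [mixedMoment]

theorem mixedMoment_one_zero_of_integral_eq_zero {Z : Ω → ℝ × ℝ} (hZ : Integrable Z P)
    (hZ₀ : ∫ ω, Z ω ∂P = 0) : mixedMoment Z 1 0 P = 0 := by
  simp [mixedMoment, ← fst_integral hZ, hZ₀]

theorem mixedMoment_zero_one_of_integral_eq_zero {Z : Ω → ℝ × ℝ} (hZ : Integrable Z P)
    (hZ₀ : ∫ ω, Z ω ∂P = 0) : mixedMoment Z 0 1 P = 0 := by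
  simp [mixedMoment, ← snd_integral hZ, hZ₀]

theorem mixedMoment_zero_vector {m n : ℕ} (h : m + n ≠ 0) :
    mixedMoment (0 : Ω → ℝ × ℝ) m n P = 0 := by
  simp only [mixedMoment, Pi.zero_apply, Prod.fst_zero, Prod.snd_zero, ← pow_add, zero_pow h,
    integral_zero]

theorem fourthJointCumulant_zero : fourthJointCumulant (0 : Ω → ℝ × ℝ) P = 0 := by
  simp [fourthJointCumulant, mixedMoment_zero_vector]

theorem mixedMoment_smul_const (X : Ω → ℝ) (c : ℝ × ℝ) (m n : ℕ) :
    mixedMoment (fun ω => X ω • c) m n P = c.1 ^ m * c.2 ^ n * ∫ ω, X ω ^ (m + n) ∂P := by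
  rw [mixedMoment, ← integral_const_mul]
  congr 1 with ω
  simp only [Prod.smul_fst, Prod.smul_snd, smul_eq_mul]
  ring

theorem fourthJointCumulant_smul_const (X : Ω → ℝ) (c : ℝ × ℝ) :
    fourthJointCumulant (fun ω => X ω • c) P =
      c.1 ^ 2 * c.2 ^ 2 * (∫ ω, X ω ^ 4 ∂P - 3 * (∫ ω, X ω ^ 2 ∂P) ^ 2) := by
  simp only [fourthJointCumulant, mixedMoment_smul_const, Nat.reduceAdd]
  ring

theorem integrable_fst_pow_mul_snd_pow [IsFiniteMeasure P] {Z : Ω → ℝ × ℝ} {p : ENNReal} {m n : ℕ}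
    (hZ : MemLp Z p P) (hmn : (m + n : ℕ) ≤ p) :
    Integrable (fun ω => (Z ω).1 ^ m * (Z ω).2 ^ n) P := by
  have hmeas : AEStronglyMeasurable (fun ω => (Z ω).1 ^ m * (Z ω).2 ^ n) P :=
    (hZ.1.fst.pow m).mul (hZ.1.snd.pow n)
  refine (hZ.mono_exponent hmn).integrable_norm_pow'.mono' hmeas (.of_forall fun ω => ?_)
  rw [norm_mul, norm_pow, norm_pow, pow_add]
  gcongr
  exacts [norm_fst_le _, norm_snd_le _]

theorem mixedMoment_add_of_indepFun [IsFiniteMeasure P] {Z W : Ω → ℝ × ℝ} {p : ENNReal} {m n : ℕ}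
    (hZ : MemLp Z p P) (hW : MemLp W p P) (hZW : IndepFun Z W P) (hmn : (m + n : ℕ) ≤ p) :
    mixedMoment (Z + W) m n P = ∑ i ∈ range (m + 1), ∑ j ∈ range (n + 1),
      m.choose i * n.choose j * (mixedMoment Z i j P * mixedMoment W (m - i) (n - j) P) := by
  have monomial_measurable (i j : ℕ) : Measurable fun z : ℝ × ℝ => z.1 ^ i * z.2 ^ j := by fun_prop
  have binomial (ω : Ω) : ((Z + W) ω).1 ^ m * ((Z + W) ω).2 ^ n =
      ∑ i ∈ range (m + 1), ∑ j ∈ range (n + 1), (m.choose i * n.choose j : ℝ) *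
        (((Z ω).1 ^ i * (Z ω).2 ^ j) * ((W ω).1 ^ (m - i) * (W ω).2 ^ (n - j))) := by
    simp only [Pi.add_apply, Prod.fst_add, Prod.snd_add, add_pow, sum_mul_sum]
    exact sum_congr rfl fun i _ => sum_congr rfl fun j _ => by ring
  have integrable_term : ∀ i ∈ range (m + 1), ∀ j ∈ range (n + 1), Integrable
      (fun ω => (m.choose i * n.choose j : ℝ) *
        (((Z ω).1 ^ i * (Z ω).2 ^ j) * ((W ω).1 ^ (m - i) * (W ω).2 ^ (n - j)))) P := by
    intro i hi j hj
    rw [mem_range] at hi hj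
    have degree_le {k : ℕ} (hk : k ≤ m + n) : (k : ENNReal) ≤ p := le_trans (mod_cast hk) hmn
    exact ((hZW.comp (monomial_measurable i j) (monomial_measurable (m - i) (n - j))).integrable_mul
      (integrable_fst_pow_mul_snd_pow hZ (degree_le (by lia)))
      (integrable_fst_pow_mul_snd_pow hW (degree_le (by lia)))).const_mul _
  simp_rw [mixedMoment, binomial]
  rw [integral_finsetSum _ fun i hi => integrable_finsetSum _ (integrable_term i hi)]
  refine sum_congr rfl fun i hi => ?_
  rw [integral_finsetSum _ (integrable_term i hi)]
  refine sum_congr rfl fun j _ => ?_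
  rw [integral_const_mul, hZW.integral_fun_comp_mul_comp hZ.1.aemeasurable hW.1.aemeasurable
    (monomial_measurable i j).aestronglyMeasurable
    (monomial_measurable (m - i) (n - j)).aestronglyMeasurable]

section CenteredIndependent

variable [IsProbabilityMeasure P] {Z W : Ω → ℝ × ℝ}

theorem mixedMoment_add_of_add_eq_two {m n : ℕ} (hmn : m + n = 2) (hZ : MemLp Z 2 P)
    (hW : MemLp W 2 P) (hZ₀ : ∫ ω, Z ω ∂P = 0) (hZW : IndepFun Z W P) :
    mixedMoment (Z + W) m n P = mixedMoment Z m n P + mixedMoment W m n P := by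
  have hZi := hZ.integrable one_le_two
  rw [mixedMoment_add_of_indepFun hZ hW hZW (by simp [hmn])]
  obtain ⟨rfl, rfl⟩ | ⟨rfl, rfl⟩ | ⟨rfl, rfl⟩ :
      m = 0 ∧ n = 2 ∨ m = 1 ∧ n = 1 ∨ m = 2 ∧ n = 0 := by lia
  all_goals
    simp [sum_range_succ, mixedMoment_zero_zero, mixedMoment_one_zero_of_integral_eq_zero hZi hZ₀,
      mixedMoment_zero_one_of_integral_eq_zero hZi hZ₀, add_comm]

theorem mixedMoment_two_two_add (hZ : MemLp Z 4 P) (hW : MemLp W 4 P)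
    (hZ₀ : ∫ ω, Z ω ∂P = 0) (hW₀ : ∫ ω, W ω ∂P = 0) (hZW : IndepFun Z W P) :
    mixedMoment (Z + W) 2 2 P = mixedMoment Z 2 2 P + mixedMoment W 2 2 P +
      mixedMoment Z 2 0 P * mixedMoment W 0 2 P + mixedMoment Z 0 2 P * mixedMoment W 2 0 P +
      4 * (mixedMoment Z 1 1 P * mixedMoment W 1 1 P) := by
  have hZi := hZ.integrable (by norm_num)
  have hWi := hW.integrable (by norm_num)
  rw [mixedMoment_add_of_indepFun hZ hW hZW (by norm_num)]
  simp only [sum_range_succ, sum_range_zero, Nat.choose_zero_right, Nat.choose_one_right,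
    Nat.choose_self, Nat.sub_zero, Nat.sub_self, Nat.reduceSub, mixedMoment_zero_zero,
    mixedMoment_one_zero_of_integral_eq_zero hZi hZ₀,
    mixedMoment_zero_one_of_integral_eq_zero hZi hZ₀,
    mixedMoment_one_zero_of_integral_eq_zero hWi hW₀,
    mixedMoment_zero_one_of_integral_eq_zero hWi hW₀]
  push_cast
  ring

theorem fourthJointCumulant_add (hZ : MemLp Z 4 P) (hW : MemLp W 4 P)
    (hZ₀ : ∫ ω, Z ω ∂P = 0) (hW₀ : ∫ ω, W ω ∂P = 0) (hZW : IndepFun Z W P) :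
    fourthJointCumulant (Z + W) P = fourthJointCumulant Z P + fourthJointCumulant W P := by
  have hZ₂ : MemLp Z 2 P := hZ.mono_exponent (by norm_num)
  have hW₂ : MemLp W 2 P := hW.mono_exponent (by norm_num)
  simp only [fourthJointCumulant, mixedMoment_two_two_add hZ hW hZ₀ hW₀ hZW,
    mixedMoment_add_of_add_eq_two (Nat.add_zero 2) hZ₂ hW₂ hZ₀ hZW,
    mixedMoment_add_of_add_eq_two one_add_one_eq_two hZ₂ hW₂ hZ₀ hZW,
    mixedMoment_add_of_add_eq_two (Nat.zero_add 2) hZ₂ hW₂ hZ₀ hZW]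
  ring

end CenteredIndependent

theorem map_sum_of_iIndepFun [IsFiniteMeasure P] {ι E M : Type*} [NormedAddCommGroup E]
    [NormedSpace ℝ E] [MeasurableSpace E] [BorelSpace E] [SecondCountableTopology E]
    [AddCommMonoid M] {p : ENNReal} (hp : 1 ≤ p) {F : (Ω → E) → M} (F_zero : F 0 = 0)
    (F_add : ∀ Z W : Ω → E, MemLp Z p P → MemLp W p P → ∫ ω, Z ω ∂P = 0 → ∫ ω, W ω ∂P = 0 →
      IndepFun Z W P → F (Z + W) = F Z + F W)
    {Z : ι → Ω → E} (hindep : iIndepFun Z P) (hZ : ∀ j, MemLp (Z j) p P)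
    (hmean : ∀ j, ∫ ω, Z j ω ∂P = 0) (s : Finset ι) :
    F (∑ j ∈ s, Z j) = ∑ j ∈ s, F (Z j) := by
  classical
  induction s using Finset.induction_on with
  | empty => simpa using F_zero
  | insert i s hi ih =>
    have hsum_mean : ∫ ω, (∑ j ∈ s, Z j) ω ∂P = 0 := by
      simp only [Finset.sum_apply]
      rw [integral_finsetSum s fun j _ => (hZ j).integrable hp, sum_eq_zero fun j _ => hmean j]
    have hsum_indep : IndepFun (∑ j ∈ s, Z j) (Z i) P :=
      hindep.indepFun_finsetSum_of_notMem₀ (fun j => (hZ j).1.aemeasurable) hi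
    rw [sum_insert hi, sum_insert hi, ← ih]
    exact F_add _ _ (hZ i) (memLp_finsetSum' s fun j _ => hZ j) (hmean i) hsum_mean hsum_indep.symm

section CenteredIndependentFamily

variable [IsProbabilityMeasure P] {ι : Type*} {Z : ι → Ω → ℝ × ℝ}

theorem mixedMoment_sum_of_add_eq_two {m n : ℕ} (hmn : m + n = 2) (hindep : iIndepFun Z P)
    (hZ : ∀ j, MemLp (Z j) 2 P) (hmean : ∀ j, ∫ ω, Z j ω ∂P = 0) (s : Finset ι) :
    mixedMoment (∑ j ∈ s, Z j) m n P = ∑ j ∈ s, mixedMoment (Z j) m n P :=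
  map_sum_of_iIndepFun (F := fun Z => mixedMoment Z m n P) one_le_two
    (mixedMoment_zero_vector (by lia))
    (fun _ _ hZ hW hZ₀ _ hZW => mixedMoment_add_of_add_eq_two hmn hZ hW hZ₀ hZW) hindep hZ hmean s

theorem fourthJointCumulant_sum (hindep : iIndepFun Z P) (hZ : ∀ j, MemLp (Z j) 4 P)
    (hmean : ∀ j, ∫ ω, Z j ω ∂P = 0) (s : Finset ι) :
    fourthJointCumulant (∑ j ∈ s, Z j) P = ∑ j ∈ s, fourthJointCumulant (Z j) P :=
  map_sum_of_iIndepFun (F := fun Z => fourthJointCumulant Z P) (by norm_num)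
    fourthJointCumulant_zero (fun _ _ => fourthJointCumulant_add) hindep hZ hmean s

theorem mixedMoment_two_two_sum (hindep : iIndepFun Z P) (hZ : ∀ j, MemLp (Z j) 4 P)
    (hmean : ∀ j, ∫ ω, Z j ω ∂P = 0) (s : Finset ι) :
    mixedMoment (∑ j ∈ s, Z j) 2 2 P =
      2 * (∑ j ∈ s, mixedMoment (Z j) 1 1 P) ^ 2 +
        (∑ j ∈ s, mixedMoment (Z j) 2 0 P) * (∑ j ∈ s, mixedMoment (Z j) 0 2 P) +
        ∑ j ∈ s, fourthJointCumulant (Z j) P := by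
  have hZ₂ (j : ι) : MemLp (Z j) 2 P := (hZ j).mono_exponent (by norm_num)
  rw [← mixedMoment_sum_of_add_eq_two one_add_one_eq_two hindep hZ₂ hmean,
    ← mixedMoment_sum_of_add_eq_two (Nat.add_zero 2) hindep hZ₂ hmean,
    ← mixedMoment_sum_of_add_eq_two (Nat.zero_add 2) hindep hZ₂ hmean,
    ← fourthJointCumulant_sum hindep hZ hmean, fourthJointCumulant]
  ring

end CenteredIndependentFamily

theorem sparse_projection_row_inner_second_moment_general [IsProbabilityMeasure P] {ι : Type*}
    [Fintype ι] {Φ : ι → Ω → ℝ} (hindep : iIndepFun Φ P) (hL4 : ∀ j, MemLp (Φ j) 4 P)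
    (hmean : ∀ j, ∫ ω, Φ j ω ∂P = 0) (u v : ι → ℝ) :
    ∫ ω, ((∑ j, u j * Φ j ω) * (∑ j, v j * Φ j ω)) ^ 2 ∂P =
      2 * (∑ j, u j * v j * ∫ ω, Φ j ω ^ 2 ∂P) ^ 2 +
        (∑ j, u j ^ 2 * ∫ ω, Φ j ω ^ 2 ∂P) * (∑ j, v j ^ 2 * ∫ ω, Φ j ω ^ 2 ∂P) +
        ∑ j, u j ^ 2 * v j ^ 2 * (∫ ω, Φ j ω ^ 4 ∂P - 3 * (∫ ω, Φ j ω ^ 2 ∂P) ^ 2) := by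
  let Z (j : ι) (ω : Ω) : ℝ × ℝ := Φ j ω • (u j, v j)
  have hZ_indep : iIndepFun Z P :=
    hindep.comp (fun j x => x • (u j, v j)) fun j => by fun_prop
  have hZ_memLp (j : ι) : MemLp (Z j) 4 P :=
    (ContinuousLinearMap.toSpanSingleton ℝ (u j, v j)).comp_memLp' (hL4 j)
  have hZ_mean (j : ι) : ∫ ω, Z j ω ∂P = 0 := by
    rw [integral_smul_const, hmean, zero_smul]
  calc ∫ ω, ((∑ j, u j * Φ j ω) * (∑ j, v j * Φ j ω)) ^ 2 ∂P
    _ = mixedMoment (∑ j, Z j) 2 2 P := by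
      simp [mixedMoment, Z, Prod.fst_sum, Prod.snd_sum, mul_pow, mul_comm]
    _ = 2 * (∑ j, mixedMoment (Z j) 1 1 P) ^ 2 +
          (∑ j, mixedMoment (Z j) 2 0 P) * (∑ j, mixedMoment (Z j) 0 2 P) +
          ∑ j, fourthJointCumulant (Z j) P :=
      mixedMoment_two_two_sum hZ_indep hZ_memLp hZ_mean univ
    _ = _ := by
      simp only [Z, mixedMoment_smul_const, fourthJointCumulant_smul_const, pow_zero, pow_one,
        mul_one, one_mul, Nat.reduceAdd]

end IndependentPlaneVectors

/-- One row of a sparse random projection: if `Φ₁, …, Φ_N` are independent with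
`E[Φ_j] = 0`, `E[Φ_j²] = 1`, `E[Φ_j⁴] = 1/g_j`, then for `u v : ℝ^N` and
`w = (Σ_j u_j Φ_j)(Σ_j v_j Φ_j)` one has
`E[w²] = 2⟨u,v⟩² + ‖u‖₂²‖v‖₂² + Σ_j (1/g_j) u_j² v_j² − 3 Σ_j u_j² v_j²`. -/
theorem sparse_projection_row_inner_second_moment
    {Ω : Type*} [MeasurableSpace Ω] (P : Measure Ω) [IsProbabilityMeasure P]
    (N : ℕ) (hN : 0 < N) (g : Fin N → ℝ)
    (hg0 : ∀ j, 0 < g j) (hg1 : ∀ j, g j ≤ 1)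
    (Φ : Fin N → Ω → ℝ)
    (hindep : iIndepFun Φ P)
    (hL4 : ∀ j, MemLp (Φ j) 4 P)
    (hmean : ∀ j, ∫ ω, Φ j ω ∂P = 0)
    (hsq : ∀ j, ∫ ω, (Φ j ω) ^ 2 ∂P = 1)
    (hfour : ∀ j, ∫ ω, (Φ j ω) ^ 4 ∂P = 1 / g j)
    (u v : Fin N → ℝ) :
    ∫ ω, ((∑ j, u j * Φ j ω) * (∑ j, v j * Φ j ω)) ^ 2 ∂P =
      2 * (∑ j, u j * v j) ^ 2 + (∑ j, (u j) ^ 2) * (∑ j, (v j) ^ 2) +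
        ∑ j, (1 / g j) * (u j) ^ 2 * (v j) ^ 2 - 3 * ∑ j, (u j) ^ 2 * (v j) ^ 2 := by
  simp only [sparse_projection_row_inner_second_moment_general hindep hL4 hmean u v, hsq, hfour,
    mul_rotate (1 / g _), mul_one, one_pow, mul_sub, sum_sub_distrib, ← sum_mul]
  ring
end

section
/- (Proposition 1, variance part.) Let (Ω, P) be a probability space, let ℓ and N be positive integers, and let g : Fin N → ℝ with 0 < g_j ≤ 1 for all j. Let (Φ_{ij})_{i∈Fin ℓ, j∈Fin N} be mutually independent real random variables with E[Φ_{ij}] = 0, E[Φ_{ij}²] = 1, and E[Φ_{ij}⁴] = 1/g_j for all i, j (each Φ_{ij} lying in L⁴). For u, v ∈ ℝ^N, let x = (1/√ℓ)·Φu and y = (1/√ℓ)·Φv, where Φ is the ℓ × N random matrix with entries Φ_{ij}. Then Var(⟨x, y⟩) = (1/ℓ)·( ⟨u, v⟩² + ‖u‖₂²·‖v‖₂² + Σ_{j=1}^{N} (1/g_j)·u_j²·v_j² − 3·Σ_{j=1}^{N} u_j²·v_j² ). -/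
open MeasureTheory ProbabilityTheory Finset

/-!
The fourth joint cumulant `κ(X, X, Y, Y)` is additive over independent pairs and bihomogeneous of
degree `(2, 2)`. For a row `X` of centered independent entries, `U = ∑ u_j X_j` and
`V = ∑ v_j X_j`, this gives `κ(U, U, V, V) = ∑ u_j² v_j² (E[X_j⁴] - 3 E[X_j²]²)`, while
`Var(U V) = κ(U, U, V, V) + Var U · Var V + Cov(U, V)²`. The summands of `⟨x, y⟩` that come from
different rows are independent, so their variances add up.
-/

section Moments

variable {Ω : Type*} [MeasurableSpace Ω] {P : Measure Ω} {A B C D : Ω → ℝ}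

lemma integrable_pow_mul_pow [IsFiniteMeasure P] {m n k : ℕ} (hA : MemLp A k P)
    (hB : MemLp B k P) (hmn : m + n ≤ k) : Integrable (fun ω => A ω ^ m * B ω ^ n) P := by
  have hdom : Integrable (fun ω => 1 + (‖A ω‖ ^ k + ‖B ω‖ ^ k)) P :=
    (integrable_const 1).add (hA.integrable_norm_pow'.add hB.integrable_norm_pow')
  refine hdom.mono' ((hA.1.pow m).mul (hB.1.pow n)) (.of_forall fun ω => ?_)
  set M := max 1 (max ‖A ω‖ ‖B ω‖)
  have hAM : ‖A ω‖ ≤ M := (le_max_left _ _).trans (le_max_right _ _)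
  have hBM : ‖B ω‖ ≤ M := (le_max_right _ _).trans (le_max_right _ _)
  calc ‖A ω ^ m * B ω ^ n‖ = ‖A ω‖ ^ m * ‖B ω‖ ^ n := by rw [norm_mul, norm_pow, norm_pow]
    _ ≤ M ^ m * M ^ n := by gcongr
    _ = M ^ (m + n) := (pow_add M m n).symm
    _ ≤ M ^ k := pow_le_pow_right₀ (le_max_left _ _) hmn
    _ ≤ 1 + (‖A ω‖ ^ k + ‖B ω‖ ^ k) := by
      have hA0 : 0 ≤ ‖A ω‖ ^ k := by positivity
      have hB0 : 0 ≤ ‖B ω‖ ^ k := by positivity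
      rcases max_choice 1 (max ‖A ω‖ ‖B ω‖) with h | h
      · simp only [M, h, one_pow]
        linarith
      · rcases max_choice ‖A ω‖ ‖B ω‖ with h' | h' <;> simp only [M, h, h'] <;> linarith

lemma memLp_two_mul (hA : MemLp A 4 P) (hB : MemLp B 4 P) :
    MemLp (fun ω => A ω * B ω) 2 P := by
  have hhalf : (4 : ENNReal)⁻¹ = 2⁻¹ / 2 := by
    rw [div_eq_mul_inv, ← ENNReal.mul_inv (by simp) (by simp)]
    norm_num
  have : ENNReal.HolderTriple 4 4 2 := ⟨by rw [hhalf, ENNReal.add_halves]⟩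
  exact hB.mul hA

lemma indepFun_pow_mul_pow (h : IndepFun (fun ω => (A ω, B ω)) (fun ω => (C ω, D ω)) P)
    (m n k l : ℕ) : IndepFun (fun ω => A ω ^ m * B ω ^ n) (fun ω => C ω ^ k * D ω ^ l) P :=
  h.comp (φ := fun z : ℝ × ℝ => z.1 ^ m * z.2 ^ n) (ψ := fun z : ℝ × ℝ => z.1 ^ k * z.2 ^ l)
    (by fun_prop) (by fun_prop)

lemma integral_add_pow_mul_add_pow [IsFiniteMeasure P] {m n : ℕ}
    (h : IndepFun (fun ω => (A ω, B ω)) (fun ω => (C ω, D ω)) P)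
    (hA : MemLp A (m + n : ℕ) P) (hB : MemLp B (m + n : ℕ) P)
    (hC : MemLp C (m + n : ℕ) P) (hD : MemLp D (m + n : ℕ) P) :
    ∫ ω, (A ω + C ω) ^ m * (B ω + D ω) ^ n ∂P =
      ∑ i ∈ range (m + 1), ∑ j ∈ range (n + 1), (m.choose i * n.choose j : ℝ) *
        ((∫ ω, A ω ^ i * B ω ^ j ∂P) * ∫ ω, C ω ^ (m - i) * D ω ^ (n - j) ∂P) := by
  have hexpand : ∀ ω, (A ω + C ω) ^ m * (B ω + D ω) ^ n =
      ∑ i ∈ range (m + 1), ∑ j ∈ range (n + 1), (m.choose i * n.choose j : ℝ) *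
        ((A ω ^ i * B ω ^ j) * (C ω ^ (m - i) * D ω ^ (n - j))) := fun ω => by
    rw [add_pow, add_pow, sum_mul_sum]
    exact sum_congr rfl fun i _ => sum_congr rfl fun j _ => by ring
  have hAB : ∀ i ∈ range (m + 1), ∀ j ∈ range (n + 1),
      Integrable (fun ω => A ω ^ i * B ω ^ j) P := fun i hi j hj =>
    integrable_pow_mul_pow hA hB (by grind)
  have hCD : ∀ i j, Integrable (fun ω => C ω ^ (m - i) * D ω ^ (n - j)) P := fun i j =>
    integrable_pow_mul_pow hC hD (by lia)
  have hint : ∀ i ∈ range (m + 1), ∀ j ∈ range (n + 1), Integrable (fun ω =>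
      (m.choose i * n.choose j : ℝ) *
        ((A ω ^ i * B ω ^ j) * (C ω ^ (m - i) * D ω ^ (n - j)))) P := fun i hi j hj =>
    ((indepFun_pow_mul_pow h _ _ _ _).integrable_mul (hAB i hi j hj) (hCD i j)).const_mul _
  simp_rw [hexpand]
  rw [integral_finsetSum _ fun i hi => integrable_finsetSum _ (hint i hi)]
  refine sum_congr rfl fun i hi => ?_
  rw [integral_finsetSum _ (hint i hi)]
  refine sum_congr rfl fun j hj => ?_
  rw [integral_const_mul, (indepFun_pow_mul_pow h _ _ _ _).integral_fun_mul_eq_mul_integral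
    (hAB i hi j hj).1 (hCD i j).1]

lemma integral_add_sq_mul_add_sq_of_integral_eq_zero [IsProbabilityMeasure P]
    (h : IndepFun (fun ω => (A ω, B ω)) (fun ω => (C ω, D ω)) P)
    (hA : MemLp A 4 P) (hB : MemLp B 4 P) (hC : MemLp C 4 P) (hD : MemLp D 4 P)
    (hA0 : P[A] = 0) (hB0 : P[B] = 0) (hC0 : P[C] = 0) (hD0 : P[D] = 0) :
    ∫ ω, (A ω + C ω) ^ 2 * (B ω + D ω) ^ 2 ∂P =
      ∫ ω, A ω ^ 2 * B ω ^ 2 ∂P + ∫ ω, C ω ^ 2 * D ω ^ 2 ∂P +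
        (∫ ω, A ω ^ 2 ∂P) * (∫ ω, D ω ^ 2 ∂P) + (∫ ω, C ω ^ 2 ∂P) * (∫ ω, B ω ^ 2 ∂P) +
        4 * (∫ ω, A ω * B ω ∂P) * ∫ ω, C ω * D ω ∂P := by
  have hbinom := integral_add_pow_mul_add_pow (m := 2) (n := 2) h
    (mod_cast hA) (mod_cast hB) (mod_cast hC) (mod_cast hD)
  simp only [Nat.reduceAdd, sum_range_succ, range_one, sum_singleton, Nat.choose_zero_right,
    Nat.choose_succ_self_right, Nat.choose_self, Nat.cast_one, Nat.cast_ofNat, tsub_zero,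
    tsub_self, Nat.add_one_sub_one, pow_zero, pow_one, one_mul, mul_one, integral_const,
    probReal_univ, smul_eq_mul, hA0, hB0, hC0, hD0, zero_mul, mul_zero, zero_add,
    add_zero] at hbinom
  rw [hbinom]
  ring

lemma covariance_add_add_of_indepFun [IsFiniteMeasure P]
    (h : IndepFun (fun ω => (A ω, B ω)) (fun ω => (C ω, D ω)) P)
    (hA : MemLp A 2 P) (hB : MemLp B 2 P) (hC : MemLp C 2 P) (hD : MemLp D 2 P) :
    cov[A + C, B + D; P] = cov[A, B; P] + cov[C, D; P] := by
  have hAD : IndepFun A D P := h.comp measurable_fst measurable_snd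
  have hCB : IndepFun C B P := (h.comp measurable_snd measurable_fst).symm
  rw [covariance_add_left hA hC (hB.add hD), covariance_add_right hA hB hD,
    covariance_add_right hC hB hD, hAD.covariance_eq_zero hA hD,
    hCB.covariance_eq_zero hC hB, add_zero, zero_add]

end Moments

section Cumulant

variable {Ω : Type*} [MeasurableSpace Ω] {P : Measure Ω} {X Y X' Y' : Ω → ℝ}

/-- The fourth joint cumulant `κ(X, X, Y, Y)`, written in central moments. It is meaningful for
`X` and `Y` in `L⁴`; its additivity is what makes the variance of a product computable. -/
noncomputable def mixedFourthCumulant (X Y : Ω → ℝ) (P : Measure Ω) : ℝ :=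
  ∫ ω, (X ω - P[X]) ^ 2 * (Y ω - P[Y]) ^ 2 ∂P - Var[X; P] * Var[Y; P] - 2 * cov[X, Y; P] ^ 2

lemma mixedFourthCumulant_mul_const (X Y : Ω → ℝ) (a b : ℝ) :
    mixedFourthCumulant (fun ω => X ω * a) (fun ω => Y ω * b) P =
      a ^ 2 * b ^ 2 * mixedFourthCumulant X Y P := by
  have hmoment : ∫ ω, (X ω * a - P[X] * a) ^ 2 * (Y ω * b - P[Y] * b) ^ 2 ∂P =
      a ^ 2 * b ^ 2 * ∫ ω, (X ω - P[X]) ^ 2 * (Y ω - P[Y]) ^ 2 ∂P := by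
    rw [← integral_const_mul]
    exact integral_congr_ae (.of_forall fun ω => by ring)
  simp only [mixedFourthCumulant, integral_mul_const, hmoment, variance_mul_const,
    covariance_mul_const_left, covariance_mul_const_right]
  ring

lemma mixedFourthCumulant_self_of_integral_eq_zero (hX : AEMeasurable X P) (h0 : P[X] = 0) :
    mixedFourthCumulant X X P = ∫ ω, X ω ^ 4 ∂P - 3 * (∫ ω, X ω ^ 2 ∂P) ^ 2 := by
  have hpow : ∀ ω, X ω ^ 2 * X ω ^ 2 = X ω ^ 4 := fun ω => by ring
  simp only [mixedFourthCumulant, h0, sub_zero, hpow, covariance_self hX,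
    variance_of_integral_eq_zero hX h0]
  ring

variable [IsProbabilityMeasure P]

lemma mixedFourthCumulant_add
    (h : IndepFun (fun ω => (X ω, Y ω)) (fun ω => (X' ω, Y' ω)) P)
    (hX : MemLp X 4 P) (hY : MemLp Y 4 P) (hX' : MemLp X' 4 P) (hY' : MemLp Y' 4 P) :
    mixedFourthCumulant (X + X') (Y + Y') P =
      mixedFourthCumulant X Y P + mixedFourthCumulant X' Y' P := by
  have hL2 : ∀ {Z : Ω → ℝ}, MemLp Z 4 P → MemLp Z 2 P := fun hZ =>
    hZ.mono_exponent (by norm_num)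
  have hL1 : ∀ {Z : Ω → ℝ}, MemLp Z 4 P → Integrable Z P := fun hZ =>
    hZ.integrable (by norm_num)
  have hcenter : ∀ {Z : Ω → ℝ}, MemLp Z 4 P → MemLp (fun ω => Z ω - P[Z]) 4 P := fun hZ =>
    hZ.sub (memLp_const _)
  have hcentered : ∀ Z : Ω → ℝ, ∫ ω, (Z ω - P[Z]) ∂P = 0 := fun Z => by
    simpa only [average_eq_integral] using integral_sub_average P Z
  have hmean : ∀ {Z W : Ω → ℝ}, MemLp Z 4 P → MemLp W 4 P → ∀ ω,
      (Z + W) ω - P[Z + W] = (Z ω - P[Z]) + (W ω - P[W]) := fun hZ hW ω => by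
    rw [integral_add' (hL1 hZ) (hL1 hW), Pi.add_apply]
    ring
  have hXX' : IndepFun X X' P := h.comp measurable_fst measurable_fst
  have hYY' : IndepFun Y Y' P := h.comp measurable_snd measurable_snd
  have hmoment := integral_add_sq_mul_add_sq_of_integral_eq_zero
    (h.comp (φ := fun z : ℝ × ℝ => (z.1 - P[X], z.2 - P[Y]))
      (ψ := fun z : ℝ × ℝ => (z.1 - P[X'], z.2 - P[Y'])) (by fun_prop) (by fun_prop))
    (hcenter hX) (hcenter hY) (hcenter hX') (hcenter hY')
    (hcentered X) (hcentered Y) (hcentered X') (hcentered Y')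
  simp only [← variance_eq_integral hX.1.aemeasurable, ← variance_eq_integral hY.1.aemeasurable,
    ← variance_eq_integral hX'.1.aemeasurable, ← variance_eq_integral hY'.1.aemeasurable,
    ← covariance.eq_1] at hmoment
  simp only [mixedFourthCumulant, hmean hX hX', hmean hY hY', hmoment,
    hXX'.variance_add (hL2 hX) (hL2 hX'), hYY'.variance_add (hL2 hY) (hL2 hY'),
    covariance_add_add_of_indepFun h (hL2 hX) (hL2 hY) (hL2 hX') (hL2 hY')]
  ring

lemma mixedFourthCumulant_sum {ι : Type*} {X Y : ι → Ω → ℝ}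
    (h : iIndepFun (fun i ω => (X i ω, Y i ω)) P)
    (hX : ∀ i, MemLp (X i) 4 P) (hY : ∀ i, MemLp (Y i) 4 P) (s : Finset ι) :
    mixedFourthCumulant (∑ i ∈ s, X i) (∑ i ∈ s, Y i) P =
      ∑ i ∈ s, mixedFourthCumulant (X i) (Y i) P := by
  classical
  induction s using Finset.induction_on with
  | empty => simp [mixedFourthCumulant]
  | insert i s hi ih =>
    have hsum : (∑ j ∈ s, fun ω => (X j ω, Y j ω)) =
        fun ω => ((∑ j ∈ s, X j) ω, (∑ j ∈ s, Y j) ω) := by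
      ext ω <;> simp [Prod.fst_sum, Prod.snd_sum]
    have hindep := h.indepFun_finsetSum_of_notMem₀
      (fun j => (hX j).1.aemeasurable.prodMk (hY j).1.aemeasurable) hi
    rw [hsum] at hindep
    rw [sum_insert hi, sum_insert hi, sum_insert hi, ← ih]
    exact mixedFourthCumulant_add hindep.symm (hX i) (hY i)
      (memLp_finsetSum' _ fun j _ => hX j) (memLp_finsetSum' _ fun j _ => hY j)

lemma variance_mul_of_integral_eq_zero (hX : MemLp X 4 P) (hY : MemLp Y 4 P)
    (hX0 : P[X] = 0) (hY0 : P[Y] = 0) :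
    Var[fun ω => X ω * Y ω; P] =
      mixedFourthCumulant X Y P + Var[X; P] * Var[Y; P] + cov[X, Y; P] ^ 2 := by
  rw [variance_eq_sub (memLp_two_mul hX hY)]
  simp only [mixedFourthCumulant, covariance, hX0, hY0, sub_zero, Pi.pow_apply, mul_pow]
  ring

end Cumulant

section LinearCombination

variable {Ω ι : Type*} [MeasurableSpace Ω] {P : Measure Ω} [Fintype ι] {X : ι → Ω → ℝ}

lemma memLp_linearCombination {p : ENNReal} (hX : ∀ j, MemLp (X j) p P) (u : ι → ℝ) :
    MemLp (fun ω => ∑ j, X j ω * u j) p P :=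
  memLp_finsetSum _ fun j _ => (hX j).mul_const (u j)

lemma covariance_linearCombination [IsFiniteMeasure P] (hX : ∀ j, MemLp (X j) 2 P)
    (h : Pairwise fun j k => cov[X j, X k; P] = 0) (u v : ι → ℝ) :
    cov[fun ω => ∑ j, X j ω * u j, fun ω => ∑ j, X j ω * v j; P] =
      ∑ j, Var[X j; P] * (u j * v j) := by
  rw [covariance_fun_sum_fun_sum (fun j => (hX j).mul_const (u j))
    fun j => (hX j).mul_const (v j)]
  refine sum_congr rfl fun j _ => ?_
  rw [sum_eq_single j (fun k _ hkj => ?_) (by simp)]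
  · rw [covariance_mul_const_left, covariance_mul_const_right,
      covariance_self (hX j).1.aemeasurable]
    ring
  · rw [covariance_mul_const_left, covariance_mul_const_right, h hkj.symm, zero_mul, zero_mul]

lemma variance_linearCombination [IsFiniteMeasure P] (hX : ∀ j, MemLp (X j) 2 P)
    (h : Pairwise fun j k => cov[X j, X k; P] = 0) (u : ι → ℝ) :
    Var[fun ω => ∑ j, X j ω * u j; P] = ∑ j, Var[X j; P] * u j ^ 2 := by
  rw [← covariance_self (memLp_linearCombination hX u).1.aemeasurable,
    covariance_linearCombination hX h]
  simp only [pow_two]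

lemma integral_linearCombination_eq_zero (hX : ∀ j, Integrable (X j) P)
    (hmean : ∀ j, P[X j] = 0) (u : ι → ℝ) : ∫ ω, ∑ j, X j ω * u j ∂P = 0 := by
  rw [integral_finsetSum _ fun j _ => (hX j).mul_const (u j)]
  simp only [integral_mul_const, hmean, zero_mul, sum_const_zero]

variable [IsProbabilityMeasure P]

lemma mixedFourthCumulant_linearCombination (h : iIndepFun X P) (hX : ∀ j, MemLp (X j) 4 P)
    (u v : ι → ℝ) :
    mixedFourthCumulant (fun ω => ∑ j, X j ω * u j) (fun ω => ∑ j, X j ω * v j) P =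
      ∑ j, u j ^ 2 * v j ^ 2 * mixedFourthCumulant (X j) (X j) P := by
  have hpair : iIndepFun (fun j ω => (X j ω * u j, X j ω * v j)) P :=
    h.comp (fun j t => (t * u j, t * v j)) fun j => by fun_prop
  simpa only [Finset.sum_fn, mixedFourthCumulant_mul_const] using mixedFourthCumulant_sum hpair
    (fun j => (hX j).mul_const (u j)) (fun j => (hX j).mul_const (v j)) univ

lemma variance_linearCombination_mul_linearCombination (h : iIndepFun X P)
    (hX : ∀ j, MemLp (X j) 4 P) (hmean : ∀ j, P[X j] = 0) {σ q : ι → ℝ}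
    (hsq : ∀ j, ∫ ω, X j ω ^ 2 ∂P = σ j) (hfour : ∀ j, ∫ ω, X j ω ^ 4 ∂P = q j)
    (u v : ι → ℝ) :
    Var[fun ω => (∑ j, X j ω * u j) * (∑ j, X j ω * v j); P] =
      (∑ j, σ j * (u j * v j)) ^ 2 + (∑ j, σ j * u j ^ 2) * (∑ j, σ j * v j ^ 2) +
        ∑ j, q j * u j ^ 2 * v j ^ 2 - 3 * ∑ j, σ j ^ 2 * u j ^ 2 * v j ^ 2 := by
  have hL2 : ∀ j, MemLp (X j) 2 P := fun j => (hX j).mono_exponent (by norm_num)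
  have hL1 : ∀ j, Integrable (X j) P := fun j => (hL2 j).integrable one_le_two
  have hvar : ∀ j, Var[X j; P] = σ j := fun j => by
    rw [variance_of_integral_eq_zero (hX j).1.aemeasurable (hmean j), hsq j]
  have huncorr : Pairwise fun j k => cov[X j, X k; P] = 0 := fun j k hjk =>
    (h.indepFun hjk).covariance_eq_zero (hL2 j) (hL2 k)
  have hcumulant : ∑ j, u j ^ 2 * v j ^ 2 * mixedFourthCumulant (X j) (X j) P =
      ∑ j, q j * u j ^ 2 * v j ^ 2 - 3 * ∑ j, σ j ^ 2 * u j ^ 2 * v j ^ 2 := by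
    rw [mul_sum, ← sum_sub_distrib]
    refine sum_congr rfl fun j _ => ?_
    rw [mixedFourthCumulant_self_of_integral_eq_zero (hX j).1.aemeasurable (hmean j), hsq, hfour]
    ring
  rw [variance_mul_of_integral_eq_zero (memLp_linearCombination hX u)
    (memLp_linearCombination hX v) (integral_linearCombination_eq_zero hL1 hmean u)
    (integral_linearCombination_eq_zero hL1 hmean v),
    mixedFourthCumulant_linearCombination h hX, hcumulant, variance_linearCombination hL2 huncorr,
    variance_linearCombination hL2 huncorr, covariance_linearCombination hL2 huncorr]
  simp only [hvar]
  ring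

end LinearCombination

section Rows

variable {Ω : Type*} [MeasurableSpace Ω] {P : Measure Ω}

lemma indepFun_pi_of_disjoint_range {ι α β : Type*} [Finite α] [Finite β]
    {𝓧 : ι → Type*} [∀ i, MeasurableSpace (𝓧 i)] {X : ∀ i, Ω → 𝓧 i}
    (h : iIndepFun X P) (hX : ∀ i, AEMeasurable (X i) P) {f : α → ι} {g : β → ι}
    (hfg : ∀ a b, f a ≠ g b) :
    IndepFun (fun ω a => X (f a) ω) (fun ω b => X (g b) ω) P := by
  classical
  have := Fintype.ofFinite α
  have := Fintype.ofFinite β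
  have hdisj : Disjoint (univ.image f) (univ.image g) := by
    rw [Finset.disjoint_left]
    simp only [mem_image, mem_univ, true_and]
    rintro _ ⟨a, rfl⟩ ⟨b, hb⟩
    exact hfg a b hb.symm
  exact (h.indepFun_finset₀ _ _ hdisj hX).comp
    (φ := fun z a => z ⟨f a, mem_image_of_mem f (mem_univ a)⟩)
    (ψ := fun z b => z ⟨g b, mem_image_of_mem g (mem_univ b)⟩) (by fun_prop) (by fun_prop)

lemma pairwise_indepFun_rows {κ ι : Type*} [Finite ι]
    {𝓧 : κ × ι → Type*} [∀ p, MeasurableSpace (𝓧 p)] {Φ : ∀ p, Ω → 𝓧 p}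
    (h : iIndepFun Φ P) (hΦ : ∀ p, AEMeasurable (Φ p) P) :
    Pairwise fun i k => IndepFun (fun ω j => Φ (i, j) ω) (fun ω j => Φ (k, j) ω) P :=
  fun _ _ hik => indepFun_pi_of_disjoint_range h hΦ fun _ _ hab => hik (congrArg Prod.fst hab)

theorem sparse_projection_inner_variance_general {κ ι : Type*} [Fintype κ] [Nonempty κ]
    [Fintype ι] [IsProbabilityMeasure P] {σ q : ι → ℝ} {Φ : κ → ι → Ω → ℝ}
    (hrow : ∀ i, iIndepFun (Φ i) P)
    (hrows : Pairwise fun i k => IndepFun (fun ω j => Φ i j ω) (fun ω j => Φ k j ω) P)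
    (hL4 : ∀ i j, MemLp (Φ i j) 4 P)
    (hmean : ∀ i j, ∫ ω, Φ i j ω ∂P = 0)
    (hsq : ∀ i j, ∫ ω, Φ i j ω ^ 2 ∂P = σ j)
    (hfour : ∀ i j, ∫ ω, Φ i j ω ^ 4 ∂P = q j)
    (u v : ι → ℝ) {x y : Ω → κ → ℝ}
    (hx : ∀ ω i, x ω i = (1 / √(Fintype.card κ)) * ∑ j, Φ i j ω * u j)
    (hy : ∀ ω i, y ω i = (1 / √(Fintype.card κ)) * ∑ j, Φ i j ω * v j) :
    Var[fun ω => ∑ i, x ω i * y ω i; P] =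
      (1 / (Fintype.card κ : ℝ)) *
        ((∑ j, σ j * (u j * v j)) ^ 2 + (∑ j, σ j * u j ^ 2) * (∑ j, σ j * v j ^ 2) +
          ∑ j, q j * u j ^ 2 * v j ^ 2 - 3 * ∑ j, σ j ^ 2 * u j ^ 2 * v j ^ 2) := by
  set Z : κ → Ω → ℝ := fun i ω => (∑ j, Φ i j ω * u j) * (∑ j, Φ i j ω * v j)
  have hinner : (fun ω => ∑ i, x ω i * y ω i) =
      fun ω => (1 / (Fintype.card κ : ℝ)) * (∑ i, Z i) ω := by
    ext ω
    rw [Finset.sum_apply, mul_sum]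
    refine sum_congr rfl fun i _ => ?_
    rw [hx, hy, mul_mul_mul_comm, div_mul_div_comm, one_mul, Real.mul_self_sqrt (by positivity)]
  have hZ : ∀ i, MemLp (Z i) 2 P := fun i =>
    memLp_two_mul (memLp_linearCombination (hL4 i) u) (memLp_linearCombination (hL4 i) v)
  have hindep : Pairwise fun i k => IndepFun (Z i) (Z k) P := fun i k hik =>
    (hrows hik).comp (φ := fun z : ι → ℝ => (∑ j, z j * u j) * (∑ j, z j * v j))
      (ψ := fun z : ι → ℝ => (∑ j, z j * u j) * (∑ j, z j * v j)) (by fun_prop) (by fun_prop)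
  have hcard : (Fintype.card κ : ℝ) ≠ 0 := Nat.cast_ne_zero.mpr Fintype.card_ne_zero
  rw [hinner, variance_const_mul,
    IndepFun.variance_sum (fun i _ => hZ i) (fun i _ k _ hik => hindep hik)]
  simp only [Z, variance_linearCombination_mul_linearCombination (hrow _) (hL4 _) (hmean _)
    (hsq _) (hfour _), sum_const, card_univ, nsmul_eq_mul]
  field_simp

end Rows

/-- Proposition 1 (variance part): with `Φ_{ij}` mutually independent,
`E[Φ_{ij}] = 0`, `E[Φ_{ij}²] = 1`, `E[Φ_{ij}⁴] = 1/g_j`, and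
`x = (1/√ℓ)Φu`, `y = (1/√ℓ)Φv`, one has
`Var(⟨x,y⟩) = (1/ℓ)(⟨u,v⟩² + ‖u‖₂²‖v‖₂² + Σ_j (1/g_j) u_j² v_j² − 3 Σ_j u_j² v_j²)`. -/
theorem sparse_projection_inner_variance
    {Ω : Type*} [MeasurableSpace Ω] (P : Measure Ω) [IsProbabilityMeasure P]
    (L N : ℕ) (hL : 0 < L) (hN : 0 < N) (g : Fin N → ℝ)
    (hg0 : ∀ j, 0 < g j) (hg1 : ∀ j, g j ≤ 1)
    (Φ : Fin L × Fin N → Ω → ℝ)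
    (hindep : iIndepFun Φ P)
    (hL4 : ∀ p, MemLp (Φ p) 4 P)
    (hmean : ∀ i j, ∫ ω, Φ (i, j) ω ∂P = 0)
    (hsq : ∀ i j, ∫ ω, (Φ (i, j) ω) ^ 2 ∂P = 1)
    (hfour : ∀ i j, ∫ ω, (Φ (i, j) ω) ^ 4 ∂P = 1 / g j)
    (u v : Fin N → ℝ)
    (x y : Ω → Fin L → ℝ)
    (hx : ∀ ω i, x ω i = (1 / Real.sqrt L) * ∑ j, Φ (i, j) ω * u j)
    (hy : ∀ ω i, y ω i = (1 / Real.sqrt L) * ∑ j, Φ (i, j) ω * v j) :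
    ProbabilityTheory.variance (fun ω => ∑ i, x ω i * y ω i) P =
      (1 / (L : ℝ)) *
        ((∑ j, u j * v j) ^ 2 + (∑ j, (u j) ^ 2) * (∑ j, (v j) ^ 2) +
          ∑ j, (1 / g j) * (u j) ^ 2 * (v j) ^ 2 - 3 * ∑ j, (u j) ^ 2 * (v j) ^ 2) := by
  have : NeZero L := ⟨hL.ne'⟩
  simpa only [Fintype.card_fin, one_mul, one_pow] using
    sparse_projection_inner_variance_general
      (fun i => hindep.precomp (Prod.mk_right_injective i))
      (pairwise_indepFun_rows hindep fun p => (hL4 p).1.aemeasurable)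
      (fun i j => hL4 (i, j)) hmean hsq hfour u v
      (by simpa only [Fintype.card_fin] using hx) (by simpa only [Fintype.card_fin] using hy)
end
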